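/- Let g ∈ GL(d,ℝ) have a gap of index p (so that g⁻¹ has a gap of index d−p). Then for every p-dimensional subspace P ⊆ ℝ^d with P ∩ U_{d−p}(g⁻¹) = {0}, one has d(g·P, U_p(g)) ≤ (σ_{p+1}(g)/σ_p(g)) · (1/sin∠(P, U_{d−p}(g⁻¹))). -/

import Mathlib

noncomputable section

open scoped Matrix RealInnerProductSpace
open Filter Topology

namespace Paper

abbrev Euc (d : ℕ) : Type := EuclideanSpace ℝ (Fin d)

/-- The action of a `d × d` real matrix on Euclidean space. -/
def act {d : ℕ} (g : Matrix (Fin d) (Fin d) ℝ) (v : Euc d) : Euc d :=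
  Matrix.toEuclideanCLM (𝕜 := ℝ) g v

/-- The operator norm of a matrix acting on Euclidean space. -/
def opNorm {d : ℕ} (g : Matrix (Fin d) (Fin d) ℝ) : ℝ :=
  ‖(Matrix.toEuclideanCLM (𝕜 := ℝ) g : Euc d →L[ℝ] Euc d)‖

/-- The underlying matrix of an element of `GL (Fin d) ℝ`. -/
def mat {d : ℕ} (g : GL (Fin d) ℝ) : Matrix (Fin d) (Fin d) ℝ := ↑g

/-- The `p`-th singular value (`1`-indexed), via the min-max characterization:
`σ_p(g)` is the largest, over `p`-dimensional subspaces `P`, of the minimal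
stretch of unit vectors of `P`. -/
def sv {d : ℕ} (g : Matrix (Fin d) (Fin d) ℝ) (p : ℕ) : ℝ :=
  sSup { r | ∃ P : Submodule ℝ (Euc d), Module.finrank ℝ P = p ∧
      r = sInf { t | ∃ v ∈ P, ‖v‖ = 1 ∧ t = ‖act g v‖ } }

/-- `g` has a gap of index `p` if `σ_p(g) > σ_{p+1}(g)`. -/
def HasGap {d : ℕ} (g : Matrix (Fin d) (Fin d) ℝ) (p : ℕ) : Prop :=
  sv g (p + 1) < sv g p

/-- `U` is a Cartan attractor of index `p` for `g`: for some singular value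
decomposition `g = k·a·l` (`k`, `l` orthogonal, `a` diagonal with decreasing
nonnegative entries), `U` is the span of the first `p` columns of `k`. -/
def IsCartanAttractor {d : ℕ} (g : Matrix (Fin d) (Fin d) ℝ) (p : ℕ)
    (U : Submodule ℝ (Euc d)) : Prop :=
  ∃ k l : Matrix (Fin d) (Fin d) ℝ, ∃ σ : Fin d → ℝ,
    k ∈ Matrix.unitaryGroup (Fin d) ℝ ∧ l ∈ Matrix.unitaryGroup (Fin d) ℝ ∧
    (∀ i j : Fin d, i ≤ j → σ j ≤ σ i) ∧ (∀ i, 0 ≤ σ i) ∧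
    g = k * Matrix.diagonal σ * l ∧
    U = Submodule.span ℝ { x : Euc d | ∃ i : Fin d, (i : ℕ) < p ∧
          x = (EuclideanSpace.equiv (Fin d) ℝ).symm (fun j => k j i) }

/-- The Cartan attractor `U_p(g)`; when `g` has a gap of index `p` it is the
unique subspace satisfying `IsCartanAttractor g p`. -/
def cartanAttractor {d : ℕ} (g : Matrix (Fin d) (Fin d) ℝ) (p : ℕ) :
    Submodule ℝ (Euc d) :=
  letI := Classical.propDecidable (∃ U, IsCartanAttractor g p U)
  if h : ∃ U, IsCartanAttractor g p U then h.choose else ⊥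

/-- The angle `∠(P,Q)` between two subspaces: the infimum of angles between
nonzero vectors of `P` and `Q`. -/
def subAngle {d : ℕ} (P Q : Submodule ℝ (Euc d)) : ℝ :=
  sInf { θ | ∃ v ∈ P, v ≠ 0 ∧ ∃ w ∈ Q, w ≠ 0 ∧ θ = InnerProductGeometry.angle v w }

/-- `sin ∠(v,w)`. -/
def sinAngle {d : ℕ} (v w : Euc d) : ℝ := Real.sin (InnerProductGeometry.angle v w)

/-- The distance `d(P,Q) = max_{v ∈ P∖{0}} min_{w ∈ Q∖{0}} sin ∠(v,w)`. -/
def grassDist {d : ℕ} (P Q : Submodule ℝ (Euc d)) : ℝ :=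
  sSup { r | ∃ v ∈ P, v ≠ 0 ∧
      r = sInf { s | ∃ w ∈ Q, w ≠ 0 ∧ s = sinAngle v w } }

/-- The image `g·P` of a subspace under a matrix. -/
def mapMat {d : ℕ} (g : Matrix (Fin d) (Fin d) ℝ) (P : Submodule ℝ (Euc d)) :
    Submodule ℝ (Euc d) :=
  P.map ((Matrix.toEuclideanCLM (𝕜 := ℝ) g : Euc d →L[ℝ] Euc d) : Euc d →ₗ[ℝ] Euc d)

/-- `m(g|_W)`, the minimal stretch of unit vectors of `W` under `g`. -/
def minRestrict {d : ℕ} (g : Matrix (Fin d) (Fin d) ℝ) (W : Submodule ℝ (Euc d)) : ℝ :=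
  sInf { t | ∃ v ∈ W, ‖v‖ = 1 ∧ t = ‖act g v‖ }

/-- `‖g|_W‖`, the maximal stretch of unit vectors of `W` under `g`. -/
def normRestrict {d : ℕ} (g : Matrix (Fin d) (Fin d) ℝ) (W : Submodule ℝ (Euc d)) : ℝ :=
  sSup { t | ∃ v ∈ W, ‖v‖ = 1 ∧ t = ‖act g v‖ }


lemma le_of_sq_le_sq' {a b : ℝ} (h : a ^ 2 ≤ b ^ 2) (hb : 0 ≤ b) : a ≤ b :=
  (le_abs_self a).trans (abs_le_of_sq_le_sq h hb)

lemma exists_attractor {d : ℕ} (g : GL (Fin d) ℝ) (p : ℕ) :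
    ∃ U, IsCartanAttractor (mat g) p U := by
  set A : Matrix (Fin d) (Fin d) ℝ := (mat g)ᵀ * mat g with hA
  have hAh : A.IsHermitian := by
    have := Matrix.isHermitian_conjTranspose_mul_self (mat g)
    simpa [hA, Matrix.conjTranspose_eq_transpose_of_trivial] using this
  have hT := Matrix.isSymmetric_toEuclideanLin_iff.mpr hAh
  have hn : Module.finrank ℝ (EuclideanSpace ℝ (Fin d)) = d := finrank_euclideanSpace_fin
  set b := hT.eigenvectorBasis hn with hb
  set lam := hT.eigenvalues hn with hlam
  set V : Matrix (Fin d) (Fin d) ℝ := Matrix.of fun i j => b j i with hV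
  have hVV : Vᵀ * V = 1 := by
    ext i j
    have h := orthonormal_iff_ite.mp b.orthonormal i j
    rw [Matrix.one_apply, ← h]
    simp [Matrix.mul_apply, hV, PiLp.inner_apply, mul_comm]
  have hVV' : V * Vᵀ = 1 := mul_eq_one_comm.mp hVV
  have hAV : A * V = V * Matrix.diagonal lam := by
    ext i j
    have h := congrArg (fun x : EuclideanSpace ℝ (Fin d) => x i) (hT.apply_eigenvectorBasis hn j)
    simp only [Matrix.mul_diagonal]
    have h' : ∑ m, A i m * b j m = lam j * b j i := h
    rw [Matrix.mul_apply, mul_comm]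
    exact h'
  have hgV : (mat g * V)ᵀ * (mat g * V) = Matrix.diagonal lam := by
    rw [Matrix.transpose_mul, Matrix.mul_assoc, ← Matrix.mul_assoc (mat g)ᵀ, ← hA, hAV,
      ← Matrix.mul_assoc, hVV, Matrix.one_mul]
  have hu : IsUnit (Matrix.diagonal lam) := by
    rw [← hgV]
    have h1 : IsUnit (mat g * V) :=
      IsUnit.mul g.isUnit (IsUnit.of_mul_eq_one _ hVV')
    exact IsUnit.mul ((Matrix.isUnit_transpose _).mpr h1) h1
  have hpos : ∀ i, 0 < lam i := by
    intro i
    have h1 : lam i ≠ 0 := by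
      have := (Matrix.isUnit_diagonal.mp hu)
      rw [Pi.isUnit_iff] at this
      exact (this i).ne_zero
    have h2 : 0 ≤ lam i := by
      have := congrFun (congrFun hgV i) i
      rw [Matrix.diagonal_apply_eq, Matrix.mul_apply] at this
      rw [← this]
      exact Finset.sum_nonneg fun j _ => by
        rw [Matrix.transpose_apply]; exact mul_self_nonneg _
    exact lt_of_le_of_ne h2 h1.symm
  set s : Fin d → ℝ := fun i => Real.sqrt (lam i) with hs
  have hspos : ∀ i, 0 < s i := fun i => Real.sqrt_pos.mpr (hpos i)
  have hDD : Matrix.diagonal (fun i => (s i)⁻¹) * Matrix.diagonal s = 1 := by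
    rw [Matrix.diagonal_mul_diagonal, ← Matrix.diagonal_one]
    congr 1; ext i; exact inv_mul_cancel₀ (hspos i).ne'
  refine ⟨_, mat g * V * Matrix.diagonal (fun i => (s i)⁻¹), Vᵀ, s, ?_, ?_, ?_, ?_, ?_, rfl⟩
  · rw [Matrix.mem_unitaryGroup_iff', Matrix.star_eq_conjTranspose,
      Matrix.conjTranspose_eq_transpose_of_trivial, Matrix.transpose_mul,
      Matrix.diagonal_transpose, Matrix.mul_assoc, ← Matrix.mul_assoc (mat g * V)ᵀ, hgV,
      Matrix.diagonal_mul_diagonal, Matrix.diagonal_mul_diagonal, ← Matrix.diagonal_one]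
    congr 1; ext i
    have h1 := (hspos i).ne'
    have h2 : lam i = s i * s i := (Real.mul_self_sqrt (hpos i).le).symm
    rw [h2]; field_simp
  · rw [Matrix.mem_unitaryGroup_iff', Matrix.star_eq_conjTranspose,
      Matrix.conjTranspose_eq_transpose_of_trivial, Matrix.transpose_transpose, hVV']
  · intro i j hij
    exact Real.sqrt_le_sqrt (hT.eigenvalues_antitone hn hij)
  · exact fun i => (hspos i).le
  · rw [Matrix.mul_assoc _ _ (Matrix.diagonal s), hDD, Matrix.mul_one, Matrix.mul_assoc, hVV',
      Matrix.mul_one]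

lemma cartanAttractor_spec {d : ℕ} (g : GL (Fin d) ℝ) (p : ℕ) :
    IsCartanAttractor (mat g) p (cartanAttractor (mat g) p) := by
  have h := exists_attractor g p
  unfold cartanAttractor
  rw [dif_pos h]
  exact h.choose_spec

/-- A singular value decomposition, in terms of orthonormal bases. -/
structure IsSVD {d : ℕ} (g : Matrix (Fin d) (Fin d) ℝ) (s : Fin d → ℝ)
    (e f : OrthonormalBasis (Fin d) ℝ (Euc d)) : Prop where
  anti : ∀ i j : Fin d, i ≤ j → s j ≤ s i
  nonneg : ∀ i, 0 ≤ s i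
  map : ∀ i, act g (f i) = s i • e i

lemma exists_basis_of_unitary {d : ℕ} (k : Matrix (Fin d) (Fin d) ℝ) (hk : kᵀ * k = 1) :
    ∃ e : OrthonormalBasis (Fin d) ℝ (Euc d),
      ∀ i, e i = (EuclideanSpace.equiv (Fin d) ℝ).symm (fun j => k j i) := by
  have ho : Orthonormal ℝ
      (fun i : Fin d => ((EuclideanSpace.equiv (Fin d) ℝ).symm (fun j => k j i) : Euc d)) := by
    rw [orthonormal_iff_ite]
    intro i j
    have := congrFun (congrFun hk i) j
    rw [Matrix.one_apply, Matrix.mul_apply] at this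
    rw [← this]
    simp [PiLp.inner_apply, mul_comm]
  have ho' : Orthonormal ℝ (Set.univ.domRestrict
      (fun i : Fin d => ((EuclideanSpace.equiv (Fin d) ℝ).symm (fun j => k j i) : Euc d))) :=
    ho.comp _ Subtype.val_injective
  obtain ⟨e, he⟩ := ho'.exists_orthonormalBasis_extension_of_card_eq (by simp)
  exact ⟨e, fun i => he i (Set.mem_univ i)⟩

lemma attractor_svd {d : ℕ} {g : Matrix (Fin d) (Fin d) ℝ} {p : ℕ} {U : Submodule ℝ (Euc d)}
    (h : IsCartanAttractor g p U) : ∃ s e f, IsSVD g s e f ∧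
      U = Submodule.span ℝ { x : Euc d | ∃ i : Fin d, (i : ℕ) < p ∧ x = e i } := by
  obtain ⟨k, l, s, hk, hl, hs, hs0, hg, hU⟩ := h
  rw [Matrix.mem_unitaryGroup_iff', Matrix.star_eq_conjTranspose,
      Matrix.conjTranspose_eq_transpose_of_trivial] at hk
  rw [Matrix.mem_unitaryGroup_iff, Matrix.star_eq_conjTranspose,
      Matrix.conjTranspose_eq_transpose_of_trivial] at hl
  obtain ⟨e, he⟩ := exists_basis_of_unitary k hk
  obtain ⟨f, hf⟩ := exists_basis_of_unitary lᵀ (by rwa [Matrix.transpose_transpose])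
  refine ⟨s, e, f, ⟨hs, hs0, ?_⟩, ?_⟩
  · intro i
    have hgl : g * lᵀ = k * Matrix.diagonal s := by
      rw [hg, Matrix.mul_assoc, hl, Matrix.mul_one]
    ext j
    have := congrFun (congrFun hgl j) i
    rw [Matrix.mul_diagonal, Matrix.mul_apply] at this
    rw [hf, he]
    simp only [act, Matrix.ofLp_toEuclideanCLM]
    simp [Matrix.mulVec, dotProduct]
    simpa [mul_comm] using this
  · rw [hU]; simp only [he]

namespace IsSVD

variable {d : ℕ} {g : Matrix (Fin d) (Fin d) ℝ} {s : Fin d → ℝ}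
  {e f : OrthonormalBasis (Fin d) ℝ (Euc d)}

lemma inner_act (h : IsSVD g s e f) (i : Fin d) (v : Euc d) :
    ⟪e i, act g v⟫ = s i * ⟪f i, v⟫ := by
  have h1 : act g v = ∑ j, ⟪f j, v⟫ • (s j • e j) := by
    conv_lhs => rw [← f.sum_repr' v]
    unfold act
    rw [map_sum]
    refine Finset.sum_congr rfl fun j _ => ?_
    rw [map_smul]
    congr 1
    exact h.map j
  rw [h1, inner_sum]
  simp only [inner_smul_right, e.inner_eq_ite]
  simp [mul_comm]

lemma norm_sq (h : IsSVD g s e f) (v : Euc d) :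
    ‖act g v‖ ^ 2 = ∑ i, s i ^ 2 * ⟪f i, v⟫ ^ 2 := by
  rw [← e.sum_sq_norm_inner_right]
  refine Finset.sum_congr rfl fun j _ => ?_
  rw [h.inner_act, Real.norm_eq_abs, sq_abs, mul_pow]

lemma le_norm (h : IsSVD g s e f) (i : Fin d) (v : Euc d) (hv : ∀ j, i < j → ⟪f j, v⟫ = 0) :
    s i * ‖v‖ ≤ ‖act g v‖ := by
  refine le_of_sq_le_sq' ?_ (norm_nonneg _)
  rw [mul_pow, h.norm_sq, ← f.sum_sq_norm_inner_right, Finset.mul_sum]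
  refine Finset.sum_le_sum fun j _ => ?_
  rw [Real.norm_eq_abs, sq_abs]
  rcases lt_or_ge i j with hij | hij
  · rw [hv j hij]; simp
  · have := h.anti j i hij
    have := h.nonneg i
    gcongr

lemma norm_le (h : IsSVD g s e f) (i : Fin d) (v : Euc d) (hv : ∀ j, j < i → ⟪f j, v⟫ = 0) :
    ‖act g v‖ ≤ s i * ‖v‖ := by
  refine le_of_sq_le_sq' ?_ (mul_nonneg (h.nonneg i) (norm_nonneg _))
  rw [mul_pow, h.norm_sq, ← f.sum_sq_norm_inner_right, Finset.mul_sum]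
  refine Finset.sum_le_sum fun j _ => ?_
  rw [Real.norm_eq_abs, sq_abs]
  rcases lt_or_ge j i with hij | hij
  · rw [hv j hij]; simp
  · have := h.anti i j hij
    have := h.nonneg j
    gcongr

lemma sv_eq (h : IsSVD g s e f) (i : Fin d) : sv g ((i : ℕ) + 1) = s i := by
  have bdd : ∀ P : Submodule ℝ (Euc d),
      BddBelow { t | ∃ v ∈ P, ‖v‖ = 1 ∧ t = ‖act g v‖ } := by
    intro P
    exact ⟨0, by rintro _ ⟨v, -, -, rfl⟩; exact norm_nonneg _⟩
  have upper : ∀ r ∈ { r | ∃ P : Submodule ℝ (Euc d), Module.finrank ℝ P = (i : ℕ) + 1 ∧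
      r = sInf { t | ∃ v ∈ P, ‖v‖ = 1 ∧ t = ‖act g v‖ } }, r ≤ s i := by
    rintro _ ⟨P, hP, rfl⟩
    let F : P →ₗ[ℝ] (Fin i → ℝ) :=
      LinearMap.pi fun j => ((innerSL ℝ (f ⟨j, j.2.trans i.2⟩)).toLinearMap).comp P.subtype
    have hF : LinearMap.ker F ≠ ⊥ := LinearMap.ker_ne_bot_of_finrank_lt (by simp [hP])
    obtain ⟨v, hv, hv0⟩ := Submodule.exists_mem_ne_zero_of_ne_bot hF
    have hvi : ∀ j, j < i → ⟪f j, (v : Euc d)⟫ = 0 := by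
      intro j hj
      have := congrFun (LinearMap.mem_ker.mp hv) ⟨j, hj⟩
      simpa [F] using this
    have hn : ‖(v : Euc d)‖ ≠ 0 := by simpa using hv0
    refine (csInf_le (bdd P) ⟨(‖(v : Euc d)‖⁻¹) • (v : Euc d), P.smul_mem _ v.2, ?_, rfl⟩).trans ?_
    · rw [norm_smul, norm_inv, norm_norm, inv_mul_cancel₀ hn]
    · refine (h.norm_le i _ ?_).trans ?_
      · intro j hj
        rw [inner_smul_right, hvi j hj, mul_zero]
      · rw [norm_smul, norm_inv, norm_norm, inv_mul_cancel₀ hn, mul_one]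
  have mem : ∃ r ∈ { r | ∃ P : Submodule ℝ (Euc d), Module.finrank ℝ P = (i : ℕ) + 1 ∧
      r = sInf { t | ∃ v ∈ P, ‖v‖ = 1 ∧ t = ‖act g v‖ } }, s i ≤ r := by
    let c : Fin ((i : ℕ) + 1) → Fin d := Fin.castLE i.2
    have hc : Function.Injective c := Fin.castLE_injective _
    have hli : LinearIndependent ℝ (fun j => f (c j)) :=
      (f.orthonormal.comp c hc).linearIndependent
    let P := Submodule.span ℝ (Set.range fun j => f (c j))
    have hmem : ∀ v ∈ P, ∀ j, i < j → ⟪f j, v⟫ = 0 := by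
      intro v hv j hij
      induction hv using Submodule.span_induction with
      | mem x hx =>
        obtain ⟨m, rfl⟩ := hx
        rw [f.inner_eq_ite, if_neg]
        rintro rfl
        have : ((c m : Fin d) : ℕ) = m := rfl
        have := m.2
        have := Fin.lt_def.mp hij
        omega
      | zero => simp
      | add x y _ _ hx hy => rw [inner_add_right, hx, hy, add_zero]
      | smul a x _ hx => rw [inner_smul_right, hx, mul_zero]
    refine ⟨_, ⟨P, ?_, rfl⟩, ?_⟩
    · rw [finrank_span_eq_card hli]; simp
    · refine le_csInf ?_ ?_
      · exact ⟨_, f i, Submodule.subset_span ⟨Fin.last _, by congr 1⟩, f.norm_eq_one i, rfl⟩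
      · rintro _ ⟨v, hv, hv1, rfl⟩
        have := h.le_norm i v (hmem v hv)
        rwa [hv1, mul_one] at this
  obtain ⟨r, hr, hir⟩ := mem
  exact le_antisymm (csSup_le ⟨r, hr⟩ upper) (hir.trans (le_csSup ⟨s i, upper⟩ hr))

/-- `gᵀ e_i = s_i f_i` in weak form, giving orthogonality of different singular spaces. -/
lemma inner_eq_zero_of_ne (h : IsSVD g s e f) {e' f' : OrthonormalBasis (Fin d) ℝ (Euc d)}
    (h' : IsSVD g s e' f') (i j : Fin d) (hij : s i ≠ s j) : ⟪e i, e' j⟫ = 0 := by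
  have h1 : s j * ⟪e i, e' j⟫ = s i * ⟪f i, f' j⟫ := by
    rw [← h.inner_act, h'.map, inner_smul_right]
  have h2 : s i * ⟪e i, e' j⟫ = s j * ⟪f i, f' j⟫ := by
    have := h'.inner_act j (f i)
    rw [h.map, inner_smul_right, real_inner_comm (e i), real_inner_comm (f i)] at this
    exact this
  have h3 : (s i ^ 2 - s j ^ 2) * ⟪e i, e' j⟫ = 0 := by
    linear_combination s i * h2 - s j * h1
  rcases mul_eq_zero.mp h3 with h4 | h4
  · exact absurd ((sq_eq_sq₀ (h.nonneg i) (h.nonneg j)).mp (by linarith)) hij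
  · exact h4

end IsSVD

lemma mem_span_of_inner {d : ℕ} (e : OrthonormalBasis (Fin d) ℝ (Euc d)) (q : Fin d → Prop)
    (x : Euc d) (hx : ∀ i, ¬ q i → ⟪e i, x⟫ = 0) :
    x ∈ Submodule.span ℝ { y : Euc d | ∃ i : Fin d, q i ∧ y = e i } := by
  rw [← e.sum_repr' x]
  refine Submodule.sum_mem _ fun i _ => ?_
  by_cases hi : q i
  · exact Submodule.smul_mem _ _ (Submodule.subset_span ⟨i, hi, rfl⟩)
  · rw [hx i hi, zero_smul]; exact Submodule.zero_mem _

lemma inner_of_mem_span {d : ℕ} (e : OrthonormalBasis (Fin d) ℝ (Euc d)) (q : Fin d → Prop)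
    (x : Euc d) (hx : x ∈ Submodule.span ℝ { y : Euc d | ∃ i : Fin d, q i ∧ y = e i })
    (j : Fin d) (hj : ¬ q j) : ⟪e j, x⟫ = 0 := by
  induction hx using Submodule.span_induction with
  | mem x hx =>
    obtain ⟨m, hm, rfl⟩ := hx
    rw [e.inner_eq_ite, if_neg]
    rintro rfl
    exact hj hm
  | zero => simp
  | add x y _ _ hx hy => rw [inner_add_right, hx, hy, add_zero]
  | smul a x _ hx => rw [inner_smul_right, hx, mul_zero]

lemma act_inv_act {d : ℕ} (g : GL (Fin d) ℝ) (v : Euc d) :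
    act (mat g) (act (mat g⁻¹) v) = v := by
  have : mat g * mat g⁻¹ = 1 := by simp [mat]
  unfold act
  rw [← mul_apply_eq_comp, ← map_mul, this, map_one]
  rfl

lemma IsSVD.of_inv {d : ℕ} {g : GL (Fin d) ℝ} {s : Fin d → ℝ}
    {e f : OrthonormalBasis (Fin d) ℝ (Euc d)} (h : IsSVD (mat g⁻¹) s e f) :
    IsSVD (mat g) (fun i => (s i.rev)⁻¹) (f.reindex Fin.revPerm) (e.reindex Fin.revPerm) := by
  have hmul : ∀ i, s i • act (mat g) (e i) = f i := by
    intro i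
    have := act_inv_act g (f i)
    rw [h.map] at this
    unfold act at this ⊢
    rwa [map_smul] at this
  have hne : ∀ i, s i ≠ 0 := by
    intro i hi
    have := hmul i
    rw [hi, zero_smul] at this
    exact f.orthonormal.ne_zero i this.symm
  have hpos : ∀ i, 0 < s i := fun i => lt_of_le_of_ne (h.nonneg i) (hne i).symm
  refine ⟨?_, ?_, ?_⟩
  · intro i j hij
    exact inv_anti₀ (hpos _) (h.anti _ _ (Fin.rev_le_rev.mpr hij))
  · intro i; exact inv_nonneg.mpr (h.nonneg _)
  · intro i
    simp only [OrthonormalBasis.reindex_apply, Fin.revPerm_symm, Fin.revPerm_apply]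
    rw [← hmul, smul_smul, inv_mul_cancel₀ (hne _), one_smul]

section Angle

variable {d : ℕ} (P S : Submodule ℝ (Euc d))

lemma le_sin_angle (v w : Euc d) (hv : v ≠ 0) (hw : w ∈ S) (hw0 : w ≠ 0) :
    ‖v - S.starProjection v‖ / ‖v‖ ≤ Real.sin (InnerProductGeometry.angle v w) := by
  set b := S.starProjection v with hb
  have hperp : ⟪v - b, w⟫ = 0 := S.starProjection_inner_eq_zero v w hw
  have hpb : ⟪v - b, b⟫ = 0 := S.starProjection_inner_eq_zero v b (S.starProjection_apply_mem v)
  have hvw : ⟪v, w⟫ = ⟪b, w⟫ := by rw [inner_sub_left] at hperp; linarith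
  have hpyth : ‖v‖ ^ 2 = ‖v - b‖ ^ 2 + ‖b‖ ^ 2 := by
    have := norm_add_sq_eq_norm_sq_add_norm_sq_real hpb
    rw [sub_add_cancel] at this
    nlinarith
  have hvn : 0 < ‖v‖ := norm_pos_iff.mpr hv
  have hwn : 0 < ‖w‖ := norm_pos_iff.mpr hw0
  refine le_of_sq_le_sq' ?_ (InnerProductGeometry.sin_angle_nonneg _ _)
  rw [Real.sin_sq, InnerProductGeometry.cos_angle, hvw, div_pow, div_pow, div_le_iff₀ (by positivity)]
  have hcs : ⟪b, w⟫ ^ 2 ≤ (‖b‖ * ‖w‖) ^ 2 := by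
    rw [← sq_abs]
    exact pow_le_pow_left₀ (abs_nonneg _) (abs_real_inner_le_norm b w) 2
  have h1 : ⟪b, w⟫ ^ 2 / (‖v‖ * ‖w‖) ^ 2 * ‖v‖ ^ 2 ≤ ‖b‖ ^ 2 := by
    rw [mul_pow, div_mul_eq_mul_div, div_le_iff₀ (by positivity)]
    nlinarith [mul_le_mul_of_nonneg_right hcs (sq_nonneg ‖v‖)]
  rw [sub_mul, one_mul]
  linarith

lemma bdd_angle : BddBelow { θ | ∃ v ∈ P, v ≠ 0 ∧ ∃ w ∈ S, w ≠ 0 ∧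
    θ = InnerProductGeometry.angle v w } :=
  ⟨0, by rintro _ ⟨v, -, -, w, -, -, rfl⟩; exact InnerProductGeometry.angle_nonneg _ _⟩

lemma sin_subAngle_le (v : Euc d) (hv : v ∈ P) (hv0 : v ≠ 0) :
    Real.sin (subAngle P S) ≤ ‖v - S.starProjection v‖ / ‖v‖ := by
  set b := S.starProjection v with hb
  have hpb : ⟪b, v - b⟫ = 0 := by
    rw [real_inner_comm]
    exact S.starProjection_inner_eq_zero v b (S.starProjection_apply_mem v)
  by_cases hb0 : b = 0
  · rw [hb0, sub_zero, div_self (norm_ne_zero_iff.mpr hv0)]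
    exact Real.sin_le_one _
  · have h1 := InnerProductGeometry.sin_angle_add_of_inner_eq_zero hpb (Or.inl hb0)
    have h2 := InnerProductGeometry.angle_add_le_pi_div_two_of_inner_eq_zero hpb
    rw [add_sub_cancel] at h1 h2
    rw [← h1]
    rw [InnerProductGeometry.angle_comm] at h2 ⊢
    have h3 : 0 ≤ subAngle P S := by
      refine Real.sInf_nonneg ?_
      rintro _ ⟨v, -, -, w, -, -, rfl⟩; exact InnerProductGeometry.angle_nonneg _ _
    refine Real.sin_le_sin_of_le_of_le_pi_div_two (by linarith [Real.pi_pos]) h2 ?_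
    exact csInf_le (bdd_angle P S) ⟨v, hv, hv0, b, S.starProjection_apply_mem v, hb0, rfl⟩

lemma sin_subAngle_pos (hP : P ≠ ⊥) (hS : S ≠ ⊥) (hPS : P ⊓ S = ⊥) :
    0 < Real.sin (subAngle P S) := by
  let F : P →ₗ[ℝ] Euc d :=
    (LinearMap.id - (S.starProjection : Euc d →L[ℝ] Euc d).toLinearMap).comp P.subtype
  have hFa : ∀ v : P, F v = v - S.starProjection (v : Euc d) := fun v => rfl
  have hF : LinearMap.ker F = ⊥ := by
    rw [LinearMap.ker_eq_bot']
    intro v hv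
    rw [hFa, sub_eq_zero] at hv
    have : (v : Euc d) ∈ P ⊓ S := ⟨v.2, by rw [hv]; exact S.starProjection_apply_mem _⟩
    rw [hPS, Submodule.mem_bot] at this
    exact Subtype.ext this
  obtain ⟨K, hK, hKF⟩ := F.exists_antilipschitzWith hF
  have hK' : (0 : ℝ) < K := hK
  obtain ⟨v0, hv0, hv0'⟩ := Submodule.exists_mem_ne_zero_of_ne_bot hP
  obtain ⟨w0, hw0, hw0'⟩ := Submodule.exists_mem_ne_zero_of_ne_bot hS
  have hcl := csInf_mem_closure (s := { θ | ∃ v ∈ P, v ≠ 0 ∧ ∃ w ∈ S, w ≠ 0 ∧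
    θ = InnerProductGeometry.angle v w }) ⟨_, v0, hv0, hv0', w0, hw0, hw0', rfl⟩ (bdd_angle P S)
  have hsub : closure { θ | ∃ v ∈ P, v ≠ 0 ∧ ∃ w ∈ S, w ≠ 0 ∧
    θ = InnerProductGeometry.angle v w } ⊆ {θ | (K : ℝ)⁻¹ ≤ Real.sin θ} := by
    refine closure_minimal ?_ (isClosed_le continuous_const Real.continuous_sin)
    rintro _ ⟨v, hv, hv0, w, hw, hw0, rfl⟩
    refine le_trans ?_ (le_sin_angle S v w hv0 hw hw0)
    have h1 := hKF.le_mul_dist ⟨v, hv⟩ 0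
    rw [map_zero, dist_zero_right, dist_zero_right, hFa] at h1
    have h1' : ‖v‖ ≤ K * ‖v - S.starProjection v‖ := h1
    rw [le_div_iff₀ (norm_pos_iff.mpr hv0), inv_mul_le_iff₀ hK']
    exact h1'
  exact lt_of_lt_of_le (inv_pos.mpr hK') (hsub hcl)

end Angle

/-- Lemma A.6 of [BPS]: contraction towards the Cartan attractor. -/
theorem stmt2 {d : ℕ} (p : ℕ) (hp1 : 1 ≤ p) (hpd : p ≤ d - 1)
    (g : GL (Fin d) ℝ) (hg : HasGap (mat g) p)
    (P : Submodule ℝ (Euc d)) (hP : Module.finrank ℝ P = p)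
    (htrans : P ⊓ cartanAttractor (mat (g⁻¹)) (d - p) = ⊥) :
    grassDist (mapMat (mat g) P) (cartanAttractor (mat g) p) ≤
      (sv (mat g) (p + 1) / sv (mat g) p) *
        (1 / Real.sin (subAngle P (cartanAttractor (mat (g⁻¹)) (d - p)))) := by
  have hpd' : p < d := by omega
  obtain ⟨s1, e1, f1, h1, hU⟩ := attractor_svd (cartanAttractor_spec g p)
  obtain ⟨s2, e2, f2, h2, hS⟩ := attractor_svd (cartanAttractor_spec g⁻¹ (d - p))
  have h3 := h2.of_inv
  set U := cartanAttractor (mat g) p with hUdef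
  set S := cartanAttractor (mat g⁻¹) (d - p) with hSdef
  set e := f2.reindex Fin.revPerm with he
  set f := e2.reindex Fin.revPerm with hf
  have hs : (fun i : Fin d => (s2 i.rev)⁻¹) = s1 := by
    ext i
    exact (h3.sv_eq i).symm.trans (h1.sv_eq i)
  rw [hs] at h3
  have hS' : S = Submodule.span ℝ { y : Euc d | ∃ i : Fin d, p ≤ (i : ℕ) ∧ y = f i } := by
    rw [hS]
    congr 1
    ext y
    constructor
    · rintro ⟨i, hi, rfl⟩
      refine ⟨i.rev, ?_, ?_⟩
      · rw [Fin.val_rev]; omega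
      · simp [hf]
    · rintro ⟨i, hi, rfl⟩
      refine ⟨i.rev, ?_, ?_⟩
      · rw [Fin.val_rev]; omega
      · simp [hf]
  let i0 : Fin d := ⟨p - 1, by omega⟩
  let i1 : Fin d := ⟨p, hpd'⟩
  have hsv0 : sv (mat g) p = s1 i0 := by
    have := h1.sv_eq i0
    rwa [show ((i0 : Fin d) : ℕ) + 1 = p from Nat.sub_add_cancel hp1] at this
  have hsv1 : sv (mat g) (p + 1) = s1 i1 := h1.sv_eq i1
  have hgap : s1 i1 < s1 i0 := by
    have := hg
    unfold HasGap at this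
    rwa [hsv0, hsv1] at this
  have hs1 : 0 ≤ s1 i1 := h1.nonneg i1
  have hs0 : 0 < s1 i0 := lt_of_le_of_lt hs1 hgap
  rw [hsv0, hsv1]
  have hPne : P ≠ ⊥ := by
    rintro rfl
    rw [finrank_bot] at hP
    omega
  have hfS : ∀ j : Fin d, p ≤ (j : ℕ) → f j ∈ S := by
    intro j hj
    rw [hS']
    exact Submodule.subset_span ⟨j, hj, rfl⟩
  have hSne : S ≠ ⊥ := by
    intro hb
    have := hfS i1 le_rfl
    rw [hb, Submodule.mem_bot] at this
    exact f.orthonormal.ne_zero i1 this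
  have hsin := sin_subAngle_pos P S hPne hSne htrans
  refine Real.sSup_le ?_ (by positivity)
  rintro _ ⟨y, hy, hy0, rfl⟩
  obtain ⟨v, hv, rfl⟩ := hy
  have hv0 : v ≠ 0 := by
    rintro rfl
    exact hy0 (map_zero _)
  change sInf {t | ∃ w ∈ U, w ≠ 0 ∧ t = sinAngle (act (mat g) v) w} ≤ _
  have hle := sin_subAngle_le P S v hv hv0
  set b := S.starProjection v with hb
  have hbS : b ∈ S := S.starProjection_apply_mem v
  have hab : ∀ w ∈ S, ⟪v - b, w⟫ = 0 := fun w hw => S.starProjection_inner_eq_zero v w hw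
  set a := v - b with ha
  have hvn : 0 < ‖v‖ := norm_pos_iff.mpr hv0
  have han : 0 < ‖a‖ := by
    have := lt_of_lt_of_le hsin hle
    by_contra hcon
    have h0 : ‖a‖ = 0 := le_antisymm (not_lt.mp hcon) (norm_nonneg _)
    rw [h0, zero_div] at this
    exact lt_irrefl _ this
  have hfa : ∀ j : Fin d, p ≤ (j : ℕ) → ⟪f j, a⟫ = 0 := by
    intro j hj
    rw [real_inner_comm]
    exact hab _ (hfS j hj)
  have hfb : ∀ j : Fin d, (j : ℕ) < p → ⟪f j, b⟫ = 0 := by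
    intro j hj
    refine inner_of_mem_span f (fun i => p ≤ (i : ℕ)) b (hS' ▸ hbS) j (by simpa using hj)
  have hga : s1 i0 * ‖a‖ ≤ ‖act (mat g) a‖ := by
    refine h3.le_norm i0 a fun j hj => hfa j ?_
    have := Fin.lt_def.mp hj
    simp only [i0] at this
    omega
  have hgb : ‖act (mat g) b‖ ≤ s1 i1 * ‖b‖ := by
    refine h3.norm_le i1 b fun j hj => hfb j (Fin.lt_def.mp hj)
  have hgan : 0 < ‖act (mat g) a‖ := lt_of_lt_of_le (mul_pos hs0 han) hga
  have hga0 : act (mat g) a ≠ 0 := norm_pos_iff.mp hgan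
  have hgaU : act (mat g) a ∈ U := by
    rw [hU]
    have hmem : ∀ j : Fin d, (j : ℕ) < p → e j ∈ Submodule.span ℝ
        { x : Euc d | ∃ i : Fin d, (i : ℕ) < p ∧ x = e1 i } := by
      intro j hj
      refine mem_span_of_inner e1 (fun i => (i : ℕ) < p) _ fun i hi => ?_
      refine h1.inner_eq_zero_of_ne h3 i j (ne_of_lt ?_)
      have q1 : s1 i ≤ s1 i1 := h1.anti i1 i (Fin.le_def.mpr (not_lt.mp hi))
      have q2 : s1 i0 ≤ s1 j := h1.anti j i0 (Fin.le_def.mpr (Nat.le_sub_one_of_lt hj))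
      linarith
    rw [← e.sum_repr' (act (mat g) a)]
    refine Submodule.sum_mem _ fun j _ => ?_
    rcases lt_or_ge (j : ℕ) p with hj | hj
    · exact Submodule.smul_mem _ _ (hmem j hj)
    · rw [h3.inner_act, hfa j hj, mul_zero, zero_smul]
      exact Submodule.zero_mem _
  have hsum : act (mat g) a + act (mat g) b = act (mat g) v := by
    unfold act
    rw [← map_add, ha, sub_add_cancel]
  have horth : ⟪act (mat g) a, act (mat g) b⟫ = 0 := by
    rw [← e.sum_inner_mul_inner]
    refine Finset.sum_eq_zero fun j _ => ?_
    rw [real_inner_comm (e j), h3.inner_act, h3.inner_act]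
    rcases lt_or_ge (j : ℕ) p with hj | hj
    · rw [hfb j hj]; simp
    · rw [hfa j hj]; simp
  have hbv : ‖b‖ ≤ ‖v‖ := S.norm_starProjection_apply_le v
  have hgv : ‖act (mat g) a‖ ≤ ‖act (mat g) v‖ := by
    have := norm_add_sq_eq_norm_sq_add_norm_sq_real horth
    rw [hsum] at this
    refine le_of_sq_le_sq' ?_ (norm_nonneg _)
    nlinarith [mul_self_nonneg ‖act (mat g) b‖]
  have hbdd : BddBelow {t | ∃ w ∈ U, w ≠ 0 ∧ t = sinAngle (act (mat g) v) w} := by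
    refine ⟨0, ?_⟩
    rintro _ ⟨w, -, -, rfl⟩
    exact InnerProductGeometry.sin_angle_nonneg _ _
  refine (csInf_le hbdd ⟨act (mat g) a, hgaU, hga0, rfl⟩).trans ?_
  · have hsa := InnerProductGeometry.sin_angle_add_of_inner_eq_zero horth (Or.inl hga0)
    rw [hsum, InnerProductGeometry.angle_comm] at hsa
    unfold sinAngle
    rw [hsa]
    calc ‖act (mat g) b‖ / ‖act (mat g) v‖ ≤ (s1 i1 * ‖v‖) / (s1 i0 * ‖a‖) := by
          have q1 : ‖act (mat g) b‖ ≤ s1 i1 * ‖v‖ :=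
            hgb.trans (mul_le_mul_of_nonneg_left hbv hs1)
          have q2 : s1 i0 * ‖a‖ ≤ ‖act (mat g) v‖ := hga.trans hgv
          exact div_le_div₀ (by positivity) q1 (by positivity) q2
      _ = s1 i1 / s1 i0 * (1 / (‖a‖ / ‖v‖)) := by field_simp
      _ ≤ _ := by
          refine mul_le_mul_of_nonneg_left ?_ (by positivity)
          exact one_div_le_one_div_of_le hsin hle

end Paper
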